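/- There exists exactly one function m : Stream' ℕ → Stream' ℕ → Stream' ℕ satisfying the corecursive equation m xs ys = SCons (head xs * head ys) ((m xs (tail ys)) ⊕ (m (tail xs) ys)) for all streams xs, ys, where ⊕ is pointwise addition; moreover this unique function is the binomial (shuffle) convolution: (m xs ys).get n = ∑_{k=0}^{n} (n.choose k) * xs.get k * ys.get (n − k) for all n. -/

import Mathlib

open Stream'

/-- Pointwise addition of streams. -/
def sadd (xs ys : Stream' ℕ) : Stream' ℕ := fun n => xs.get n + ys.get n

infixl:65 " ⊕ " => sadd

/-!
The corecursive equation fixes entry `0` of `m xs ys` and expresses entry `n + 1` through entries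
`n` of `m xs ys.tail` and `m xs.tail ys`, so induction on the index leaves room for at most one
solution. The binomial convolution is a solution because Pascal's rule splits its entry `n + 1`
in exactly this way.
-/

section

variable {α β M : Type*}

/-- `m` solves the corecursive equation characterizing the shuffle product of streams. The product
of two entries is an arbitrary function `f`, so the two factors may have entries of different
types. -/
def IsShuffleProduct [Add M] (f : α → β → M) (m : Stream' α → Stream' β → Stream' M) : Prop :=
  ∀ xs ys, m xs ys =
    Stream'.cons (f xs.head ys.head) (Stream'.zip (· + ·) (m xs ys.tail) (m xs.tail ys))

namespace IsShuffleProduct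

variable [Add M] {f : α → β → M} {m m' : Stream' α → Stream' β → Stream' M}

theorem get_zero (hm : IsShuffleProduct f m) (xs : Stream' α) (ys : Stream' β) :
    (m xs ys).get 0 = f xs.head ys.head := by
  rw [hm, Stream'.get_zero_cons]

theorem get_succ (hm : IsShuffleProduct f m) (xs : Stream' α) (ys : Stream' β) (n : ℕ) :
    (m xs ys).get (n + 1) = (m xs ys.tail).get n + (m xs.tail ys).get n := by
  rw [hm, Stream'.get_succ_cons, Stream'.get_zip]

theorem unique (hm : IsShuffleProduct f m) (hm' : IsShuffleProduct f m') : m = m' := by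
  funext xs ys
  ext n
  induction n generalizing xs ys with
  | zero => rw [hm.get_zero, hm'.get_zero]
  | succ n ih => rw [hm.get_succ, hm'.get_succ, ih, ih]

end IsShuffleProduct

variable [AddCommMonoid M]

/-- The binomial convolution of two streams, with entries multiplied by `f`: the product of
exponential generating functions when `f` is multiplication. -/
def binomialConv (f : α → β → M) (xs : Stream' α) (ys : Stream' β) : Stream' M :=
  fun n => ∑ k ∈ Finset.range (n + 1), n.choose k • f (xs.get k) (ys.get (n - k))

theorem get_binomialConv (f : α → β → M) (xs : Stream' α) (ys : Stream' β) (n : ℕ) :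
    (binomialConv f xs ys).get n =
      ∑ k ∈ Finset.range (n + 1), n.choose k • f (xs.get k) (ys.get (n - k)) :=
  rfl

theorem get_zero_binomialConv (f : α → β → M) (xs : Stream' α) (ys : Stream' β) :
    (binomialConv f xs ys).get 0 = f xs.head ys.head := by
  rw [get_binomialConv, Finset.sum_range_one, Nat.choose_self, one_nsmul]

theorem get_succ_binomialConv (f : α → β → M) (xs : Stream' α) (ys : Stream' β) (n : ℕ) :
    (binomialConv f xs ys).get (n + 1) =
      (binomialConv f xs ys.tail).get n + (binomialConv f xs.tail ys).get n := by
  have shift_ys : ∀ k ∈ Finset.range (n + 1), ys.get (n + 1 - k) = ys.tail.get (n - k) :=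
    fun k hk => by rw [Nat.succ_sub (Finset.mem_range_succ_iff.mp hk), Stream'.get_succ]
  calc
    (binomialConv f xs ys).get (n + 1)
      = ∑ k ∈ Finset.range (n + 1), n.choose k • f (xs.get k) (ys.get (n + 1 - k)) +
          ∑ k ∈ Finset.range (n + 1), n.choose k • f (xs.get (k + 1)) (ys.get (n - k)) :=
        Finset.sum_choose_succ_nsmul (fun i j => f (xs.get i) (ys.get j)) n
    _ = (binomialConv f xs ys.tail).get n + (binomialConv f xs.tail ys).get n :=
        congrArg₂ (· + ·) (Finset.sum_congr rfl fun k hk => by rw [shift_ys k hk]) rfl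

theorem isShuffleProduct_binomialConv (f : α → β → M) :
    IsShuffleProduct f (binomialConv f) := by
  intro xs ys
  ext n
  cases n with
  | zero => rw [get_zero_binomialConv, Stream'.get_zero_cons]
  | succ n => rw [get_succ_binomialConv, Stream'.get_succ_cons, Stream'.get_zip]

theorem stmt_7_general (f : α → β → M) :
    (∃! m : Stream' α → Stream' β → Stream' M, IsShuffleProduct f m) ∧
    (∀ m : Stream' α → Stream' β → Stream' M, IsShuffleProduct f m →
      ∀ xs ys n, (m xs ys).get n =
        ∑ k ∈ Finset.range (n + 1), n.choose k • f (xs.get k) (ys.get (n - k))) := by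
  have eq_binomialConv {m} (hm : IsShuffleProduct f m) : m = binomialConv f :=
    hm.unique (isShuffleProduct_binomialConv f)
  refine ⟨⟨binomialConv f, isShuffleProduct_binomialConv f, fun _ => eq_binomialConv⟩, ?_⟩
  intro m hm xs ys n
  rw [eq_binomialConv hm, get_binomialConv]

end

theorem stmt_7 :
    (∃! m : Stream' ℕ → Stream' ℕ → Stream' ℕ,
      ∀ xs ys, m xs ys =
        Stream'.cons (xs.head * ys.head) ((m xs ys.tail) ⊕ (m xs.tail ys))) ∧
    (∀ m : Stream' ℕ → Stream' ℕ → Stream' ℕ,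
      (∀ xs ys, m xs ys =
        Stream'.cons (xs.head * ys.head) ((m xs ys.tail) ⊕ (m xs.tail ys))) →
      ∀ xs ys n, (m xs ys).get n =
        ∑ k ∈ Finset.range (n + 1), n.choose k * xs.get k * ys.get (n - k)) := by
  simp only [mul_assoc]
  -- `sadd` unfolds to `Stream'.zip (· + ·)`, and `•` on `ℕ` to multiplication.
  exact stmt_7_general (fun a b : ℕ => a * b)
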